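/- Let R be a ring. The following are equivalent: (1) R has a left Artinian left quotient ring Q = C⁻¹R; (2) the set C̄ is a left denominator set in the associated graded ring gr R, the localization C̄⁻¹ gr R is a left Artinian ring, n is a nilpotent ideal, and C' ⊆ C; (3) the set C̄ is a left denominator set in gr R, the left quotient ring Q(gr R/τ) of the ring gr R/τ is a left Artinian ring, n is a nilpotent ideal, and C' ⊆ C. Moreover, if these equivalent conditions hold then gr Q ≅ Q(gr R/τ) ≅ C̄⁻¹ gr R, where gr Q is the associated graded ring of Q with respect to its prime radical filtration. -/

import Mathlib

open Function

universe u v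

/-- A regular element of a ring: a two-sided non-zero-divisor. -/
def IsRegElem {R : Type*} [Ring R] (c : R) : Prop :=
  (∀ x : R, c * x = 0 → x = 0) ∧ (∀ x : R, x * c = 0 → x = 0)

/-- The set `C` of regular elements of a ring. -/
def regSet (R : Type*) [Ring R] : Set R := {c : R | IsRegElem c}

/-- A (left) ideal is two-sided. -/
def Ideal.IsTwoSidedNC {R : Type*} [Ring R] (I : Ideal R) : Prop :=
  ∀ a ∈ I, ∀ r : R, a * r ∈ I

/-- A prime (two-sided) ideal of a possibly noncommutative ring. -/
def Ideal.IsPrimeNC {R : Type*} [Ring R] (P : Ideal R) : Prop :=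
  P ≠ ⊤ ∧ P.IsTwoSidedNC ∧ ∀ a b : R, (∀ r : R, a * r * b ∈ P) → a ∈ P ∨ b ∈ P

/-- The prime radical `n` of a ring: the intersection of all prime ideals. -/
def primeRadical (R : Type*) [Ring R] : Ideal R := sInf {P : Ideal R | P.IsPrimeNC}

/-- `n` is a nilpotent ideal. -/
def IsNilpotentIdeal {R : Type*} [Ring R] (I : Ideal R) : Prop := ∃ k : ℕ, I ^ (k + 1) = ⊥

/-- `φ : R →+* Q` realizes `Q` as a left quotient ring `C⁻¹R` of `R`:  `R` embeds in `Q`,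
every regular element of `R` becomes invertible in `Q`, and every element of `Q` has the
form `(φ c)⁻¹ * (φ r)` with `c` regular. -/
structure IsLeftQuotRing {R : Type u} {Q : Type v} [Ring R] [Ring Q] (φ : R →+* Q) : Prop where
  inj : Function.Injective φ
  isUnit : ∀ c : R, IsRegElem c → IsUnit (φ c)
  denom : ∀ q : Q, ∃ c r : R, IsRegElem c ∧ φ c * q = φ r

/-- Data of a left quotient ring of `R`. -/
structure LeftQuotData (R : Type u) [Ring R] : Type (u + 1) where
  Q : Type u
  [instQ : Ring Q]
  φ : R →+* Q
  quot : IsLeftQuotRing φ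

attribute [instance] LeftQuotData.instQ

/-- `R` has a left Artinian left quotient ring `Q = C⁻¹R`. -/
def HasArtinianLeftQuot (R : Type u) [Ring R] : Prop :=
  ∃ d : LeftQuotData R, IsArtinianRing d.Q

/-- A subset of a ring is a left annihilator. -/
def IsLeftAnnihilatorSet {R : Type*} [Ring R] (A : Set R) : Prop :=
  ∃ S : Set R, A = {r : R | ∀ s ∈ S, r * s = 0}

/-- The ascending chain condition on left annihilators. -/
def ACCLeftAnnihilators (R : Type*) [Ring R] : Prop :=
  ∀ f : ℕ → Set R, (∀ i, IsLeftAnnihilatorSet (f i)) → (∀ i j, i ≤ j → f i ⊆ f j) →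
    ∃ N, ∀ k, N ≤ k → f k = f N

/-- The module `M` contains no infinite direct sum of nonzero submodules. -/
def NoInfiniteIndepFamily (R : Type*) (M : Type*) [Ring R] [AddCommGroup M] [Module R M] : Prop :=
  ¬ ∃ f : ℕ → Submodule R M, (∀ i, f i ≠ ⊥) ∧ iSupIndep f

/-- A left Goldie ring: ACC on left annihilators and no infinite direct sums of nonzero
left ideals. -/
def IsLeftGoldie (R : Type*) [Ring R] : Prop :=
  ACCLeftAnnihilators R ∧ NoInfiniteIndepFamily R R

/-- The subquotient `n^i/n^{i+1}` of `R` determined by the prime radical `n`. -/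
abbrev grPiece (R : Type*) [Ring R] (i : ℕ) :=
  ↥(primeRadical R ^ i) ⧸
    (Submodule.comap (primeRadical R ^ i : Ideal R).subtype (primeRadical R ^ (i + 1)))

/-- The class of `x ∈ n^i` in `n^i/n^{i+1}`. -/
def grMk {R : Type*} [Ring R] (i : ℕ) (x : R) (hx : x ∈ primeRadical R ^ i) : grPiece R i :=
  Submodule.Quotient.mk ⟨x, hx⟩

/-- The `C̄`-torsion submodule `τ_i` of `n^i/n^{i+1}` (take the span, which coincides with the
set of torsion elements whenever the latter is a submodule, e.g. when `C̄` is a left Ore set);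
here `C̄` is represented through `π : R → R̄` as `{c : R | IsRegElem (π c)}`. -/
def tauSub {R : Type u} {Rbar : Type v} [Ring R] [Ring Rbar] (π : R →+* Rbar) (i : ℕ) :
    Submodule R (grPiece R i) :=
  Submodule.span R {u : grPiece R i | ∃ c : R, IsRegElem (π c) ∧ c • u = 0}

/-- The `C̄`-torsionfree module `f_i = (n^i/n^{i+1})/τ_i`. -/
abbrev fMod {R : Type u} {Rbar : Type v} [Ring R] [Ring Rbar] (π : R →+* Rbar) (i : ℕ) :=
  grPiece R i ⧸ tauSub π i

/-- The class of `x ∈ n^i` in `f_i`. -/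
def fMk {R : Type u} {Rbar : Type v} [Ring R] [Ring Rbar] (π : R →+* Rbar) (i : ℕ) (x : R)
    (hx : x ∈ primeRadical R ^ i) : fMod π i :=
  Submodule.Quotient.mk (grMk i x hx)

/-- The subset `C⁻¹K = {(φ c)⁻¹ (φ a) : c ∈ C, a ∈ K}` of a left quotient ring. -/
def locSet {R : Type u} {Q : Type v} [Ring R] [Ring Q] (φ : R →+* Q) (K : Ideal R) : Set Q :=
  {q : Q | ∃ c a : R, IsRegElem c ∧ a ∈ K ∧ φ c * q = φ a}

/-- A subset of a ring is a left Ore set (multiplicatively closed and satisfying the left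
Ore condition). -/
def IsLeftOreSubset {A : Type*} [Ring A] (S : Set A) : Prop :=
  (1 : A) ∈ S ∧ (∀ s ∈ S, ∀ t ∈ S, s * t ∈ S) ∧
    ∀ s ∈ S, ∀ a : A, ∃ t ∈ S, ∃ b : A, t * a = b * s

/-- A left denominator set. -/
def IsLeftDenominatorSet {A : Type*} [Ring A] (S : Set A) : Prop :=
  IsLeftOreSubset S ∧ ∀ a : A, ∀ s ∈ S, a * s = 0 → ∃ t ∈ S, t * a = 0


/-- `c` is regular modulo the prime radical `n`, i.e. the image of `c` in `R̄ = R/n` is a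
regular element of `R̄`; this is the condition `c ∈ C'`. -/
def RegModN {R : Type*} [Ring R] (c : R) : Prop :=
  (∀ x : R, c * x ∈ primeRadical R → x ∈ primeRadical R) ∧
    (∀ x : R, x * c ∈ primeRadical R → x ∈ primeRadical R)

/-- A model of the associated graded ring `gr R = R̄ ⊕ n/n² ⊕ ⋯` of `R` with respect to the
`n`-adic (prime radical) filtration: a ring `G` together with maps
`emb i : n^i → G`, `x ↦ (x + n^{i+1} : n^i/n^{i+1}) ⊆ gr R`, which are additive, detect
`n^{i+1}`, are multiplicative across degrees, send `1` (degree 0) to `1`, generate `G`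
additively, and have independent (direct-sum) images. -/
structure GradedModel (R : Type u) [Ring R] : Type (u + 1) where
  G : Type u
  [instG : Ring G]
  emb : ℕ → R → G
  add : ∀ (i : ℕ) (x y : R), x ∈ primeRadical R ^ i → y ∈ primeRadical R ^ i →
    emb i (x + y) = emb i x + emb i y
  zero_iff : ∀ (i : ℕ) (x : R), x ∈ primeRadical R ^ i →
    (emb i x = 0 ↔ x ∈ primeRadical R ^ (i + 1))
  mul : ∀ (i j : ℕ) (x y : R), x ∈ primeRadical R ^ i → y ∈ primeRadical R ^ j →
    emb i x * emb j y = emb (i + j) (x * y)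
  one : emb 0 1 = 1
  gen : ∀ g : G, ∃ (N : ℕ) (x : ℕ → R), (∀ i, x i ∈ primeRadical R ^ i) ∧
    g = ∑ i ∈ Finset.range N, emb i (x i)
  indep : ∀ (N : ℕ) (x : ℕ → R), (∀ i, x i ∈ primeRadical R ^ i) →
    ∑ i ∈ Finset.range N, emb i (x i) = 0 → ∀ i < N, emb i (x i) = 0

attribute [instance] GradedModel.instG

/-- The copy of `C̄` inside (degree `0` of) the associated graded ring `gr R`. -/
def gradedRegSet {R : Type u} [Ring R] (d : GradedModel R) : Set d.G :=
  {g : d.G | ∃ c : R, RegModN c ∧ g = d.emb 0 c}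

/-- The `C̄`-torsion ideal `τ = ⊕_{i ≥ 1} τ_i` of `gr R`, as a set. -/
def gradedTorsionSet {R : Type u} [Ring R] (d : GradedModel R) : Set d.G :=
  {g : d.G | ∃ s ∈ gradedRegSet d, s * g = 0}

/-- A model of the left Ore localization `S⁻¹A` of a ring `A` at a (denominator) set `S`. -/
structure OreLocModel {A : Type u} [Ring A] (S : Set A) : Type (u + 1) where
  L : Type u
  [instL : Ring L]
  ψ : A →+* L
  isUnit : ∀ s ∈ S, IsUnit (ψ s)
  ker : ∀ a : A, ψ a = 0 ↔ ∃ s ∈ S, s * a = 0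
  denom : ∀ l : L, ∃ s a, s ∈ S ∧ ψ s * l = ψ a

attribute [instance] OreLocModel.instL

/-- A model of the factor ring `A/T` of a ring `A` by the (two-sided) ideal with underlying
set `T`. -/
structure FactorModel {A : Type u} [Ring A] (T : Set A) : Type (u + 1) where
  H : Type u
  [instH : Ring H]
  ρ : A →+* H
  surj : Function.Surjective ρ
  ker : ∀ a : A, ρ a = 0 ↔ a ∈ T

attribute [instance] FactorModel.instH

/-!
`gr R` is the quotient of the Rees ring `⊕ nⁱ Xⁱ ⊆ R[X]` by `⊕ nⁱ⁺¹ Xⁱ`, so statements about `gr R`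
become statements about coefficients of polynomials.

If `Q = C⁻¹R` is left Artinian, then localization commutes with powers of the prime radical, and
clearing denominators of polynomials shows that `gr Q` is the localization of `gr R` at `C̄`.
Conversely, if `n` is nilpotent and `C̄⁻¹ gr R` is left Artinian, approximating elements of `R`
modulo higher and higher powers of `n` makes `C'` a left denominator set, and shows that comparable
left ideals of `C'⁻¹R` with the same localized leading forms are equal; so `C'⁻¹R` is left Artinian.

For nilpotent `n`, the Rees ring has the same reduction modulo its prime radical as its degree `0`
part, and so has `gr R/τ`. Hence an element of `gr R/τ` is regular modulo the prime radical exactly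
when its degree `0` part is in `C'`, and inverting `C̄` in `gr R` already inverts all regular
elements of `gr R/τ` once the latter has a left Artinian left quotient ring.
-/

section TwoSidedIdeal

variable {A B : Type*} [Ring A] [Ring B]

theorem mem_ideal_pow_zero (I : Ideal A) (x : A) : x ∈ I ^ 0 := by
  simp only [Submodule.pow_zero, Ideal.one_eq_top, Submodule.mem_top]

theorem mul_mem_ideal_pow_add {I : Ideal A} [I.IsTwoSided] {i j : ℕ} {x y : A} (hx : x ∈ I ^ i)
    (hy : y ∈ I ^ j) : x * y ∈ I ^ (i + j) := by
  rw [Ideal.IsTwoSided.pow_add]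
  exact Ideal.mul_mem_mul hx hy

theorem ideal_pow_le_comap_pow {φ : A →+* B} {I : Ideal A} {J : Ideal B} (h : I ≤ J.comap φ)
    (k : ℕ) : I ^ k ≤ (J ^ k).comap φ := by
  induction k with
  | zero => exact fun x _ ↦ mem_ideal_pow_zero J (φ x)
  | succ k ih =>
    rw [Submodule.pow_succ, Ideal.mul_le]
    intro x hx y hy
    rw [Ideal.mem_comap, map_mul, Submodule.pow_succ]
    exact Ideal.mul_mem_mul (ih hx) (h hy)

theorem IsNilpotentIdeal.induction_on_pow {I : Ideal A} (hI : IsNilpotentIdeal I) {p : A → Prop}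
    (zero : p 0) (step : ∀ i, (∀ y ∈ I ^ (i + 1), p y) → ∀ x ∈ I ^ i, p x) (x : A) : p x := by
  obtain ⟨k, hk⟩ := hI
  suffices h : ∀ y ∈ I ^ 0, p y from h x (mem_ideal_pow_zero I x)
  refine Nat.decreasingInduction (motive := fun i _ ↦ ∀ y ∈ I ^ i, p y)
    (fun i _ ↦ step i) ?_ (Nat.zero_le (k + 1))
  intro y hy
  have hy0 : y = 0 := by rwa [hk, Submodule.mem_bot] at hy
  rwa [hy0]

end TwoSidedIdeal

section PrimeRadical

variable {A B : Type*} [Ring A] [Ring B]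

instance primeRadical_isTwoSided : (primeRadical A).IsTwoSided :=
  ⟨fun b ha ↦ Ideal.mem_sInf.2 fun {_} hP ↦ hP.2.1 _ (Ideal.mem_sInf.1 ha hP) b⟩

theorem primeRadical_le {P : Ideal A} (hP : P.IsPrimeNC) : primeRadical A ≤ P :=
  sInf_le hP

theorem le_of_ideal_pow_le {I P : Ideal A} (hP : P.IsPrimeNC) {k : ℕ} (h : I ^ k ≤ P) :
    I ≤ P := by
  induction k with
  | zero => exact absurd ((Ideal.eq_top_iff_one P).2 (h (mem_ideal_pow_zero I 1))) hP.1
  | succ k ih =>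
    by_contra hI
    obtain ⟨b, hb, hbP⟩ := SetLike.not_le_iff_exists.1 hI
    refine hI (ih fun a ha ↦ (hP.2.2 a b fun r ↦ h ?_).resolve_right hbP)
    rw [Submodule.pow_succ, mul_assoc]
    exact Ideal.mul_mem_mul ha (I.mul_mem_left r hb)

theorem IsNilpotentIdeal.le_primeRadical {I : Ideal A} (hI : IsNilpotentIdeal I) :
    I ≤ primeRadical A :=
  let ⟨_, hk⟩ := hI
  le_sInf fun _ hP ↦ le_of_ideal_pow_le hP (hk.trans_le bot_le)

theorem isPrimeNC_comap_iff_of_surjective {f : A →+* B} (hf : Surjective f) {P : Ideal B} :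
    (P.comap f).IsPrimeNC ↔ P.IsPrimeNC := by
  simp only [Ideal.IsPrimeNC, Ideal.IsTwoSidedNC, ne_eq, Ideal.comap_eq_top_iff, hf.forall,
    Ideal.mem_comap, map_mul]

theorem comap_primeRadical_of_surjective {f : A →+* B} (hf : Surjective f)
    (hker : RingHom.ker f ≤ primeRadical A) : (primeRadical B).comap f = primeRadical A := by
  refine le_antisymm (le_sInf fun P hP ↦ ?_) fun a ha ↦ Ideal.mem_sInf.2 fun {P} hP ↦
    primeRadical_le ((isPrimeNC_comap_iff_of_surjective hf).2 hP) ha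
  have hcomap : (P.map f).comap f = P := by
    rw [Ideal.comap_map_of_surjective' f hf]
    exact sup_eq_left.2 (hker.trans (primeRadical_le hP))
  calc (primeRadical B).comap f ≤ (P.map f).comap f := Ideal.comap_mono
        (primeRadical_le ((isPrimeNC_comap_iff_of_surjective hf).1 (by rwa [hcomap])))
    _ = P := hcomap

theorem isPrimeNC_annihilator (S : Type*) [AddCommGroup S] [Module A S] [IsSimpleModule A S] :
    (Module.annihilator A S).IsPrimeNC := by
  have := IsSimpleModule.nontrivial A S
  refine ⟨fun h ↦ not_subsingleton S (Module.annihilator_eq_top_iff.1 h),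
    fun a ha r ↦ Ideal.mul_mem_right r _ ha, fun a b hab ↦ or_iff_not_imp_right.2 fun hb ↦ ?_⟩
  simp only [Module.mem_annihilator, not_forall] at hab hb ⊢
  obtain ⟨x, hx⟩ := hb
  intro y
  obtain ⟨r, rfl⟩ := IsSimpleModule.toSpanSingleton_surjective A hx y
  simpa only [LinearMap.toSpanSingleton_apply, mul_smul] using hab r x

theorem primeRadical_le_jacobson : primeRadical A ≤ Ring.jacobson A := by
  rw [Ring.jacobson_eq_sInf_isMaximal]
  refine le_sInf fun M hM ↦ ?_
  have : IsSimpleModule A (A ⧸ M) := isSimpleModule_iff_isCoatom.2 hM.1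
  refine (primeRadical_le (isPrimeNC_annihilator (A ⧸ M))).trans fun a ha ↦ ?_
  have hone : a • (Submodule.Quotient.mk 1 : A ⧸ M) = 0 := Module.mem_annihilator.1 ha _
  rwa [← Submodule.Quotient.mk_smul, smul_eq_mul, mul_one, Submodule.Quotient.mk_eq_zero] at hone

end PrimeRadical

section RegModN

variable {A B : Type*} [Ring A] [Ring B]

theorem regModN_one : RegModN (1 : A) := by simp [RegModN]

theorem RegModN.mul {a b : A} (ha : RegModN a) (hb : RegModN b) : RegModN (a * b) :=
  ⟨fun x hx ↦ hb.1 x (ha.1 _ (by rwa [← mul_assoc])),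
    fun x hx ↦ ha.2 x (hb.2 _ (by rwa [mul_assoc]))⟩

theorem regModN_map_iff_of_surjective {f : A →+* B} (hf : Surjective f)
    (hker : RingHom.ker f ≤ primeRadical A) {a : A} : RegModN (f a) ↔ RegModN a := by
  simp only [RegModN, hf.forall, ← map_mul, ← Ideal.mem_comap,
    comap_primeRadical_of_surjective hf hker]

end RegModN

section Artinian

variable {A : Type*} [Ring A] [IsArtinianRing A]

theorem isNilpotentIdeal_primeRadical : IsNilpotentIdeal (primeRadical A) := by
  obtain ⟨k, hk⟩ := IsSemiprimaryRing.isNilpotent (R := A)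
  refine ⟨k, le_bot_iff.1 ?_⟩
  calc primeRadical A ^ (k + 1) ≤ primeRadical A ^ k := Ideal.pow_le_pow_right k.le_succ
    _ ≤ Ring.jacobson A ^ k := Ideal.pow_right_mono primeRadical_le_jacobson k
    _ ≤ ⊥ := hk.le

theorem isNilpotent_of_mem_primeRadical {x : A} (hx : x ∈ primeRadical A) : IsNilpotent x := by
  obtain ⟨k, hk⟩ := isNilpotentIdeal_primeRadical (A := A)
  exact ⟨k + 1, by simpa only [hk, Submodule.mem_bot] using Ideal.pow_mem_pow hx (k + 1)⟩

theorem isUnit_of_mul_right_regular {y : A} (h : ∀ x, x * y = 0 → x = 0) : IsUnit y :=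
  IsArtinianRing.isUnit_iff_isRightRegular.2 fun a b hab ↦
    sub_eq_zero.1 (h _ (by simpa only [sub_mul, sub_eq_zero] using hab))

theorem isUnit_of_mul_right_regular_mod_primeRadical {y : A}
    (h : ∀ x, x * y ∈ primeRadical A → x ∈ primeRadical A) : IsUnit y := by
  let π := Ideal.Quotient.mk (primeRadical A)
  have hπ : IsUnit (π y) := by
    refine isUnit_of_mul_right_regular (Ideal.Quotient.mk_surjective.forall.2 fun x ↦ ?_)
    simpa only [π, ← map_mul, Ideal.Quotient.eq_zero_iff_mem] using h x
  obtain ⟨x, hx⟩ : ∃ x, π x * π y = 1 :=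
    let ⟨z, hz⟩ := hπ.exists_left_inv
    let ⟨x, hx⟩ := Ideal.Quotient.mk_surjective z
    ⟨x, by rwa [hx]⟩
  have hnil : x * y - 1 ∈ primeRadical A := by
    rwa [← map_mul, ← map_one π, Ideal.Quotient.eq] at hx
  have hunit : IsUnit (x * y) := by
    simpa only [add_sub_cancel] using (isNilpotent_of_mem_primeRadical hnil).isUnit_one_add
  exact isUnit_of_mul_isUnit_right hunit

theorem mul_inv_mem_of_forall_mul_mem {M : Ideal A} {u : Aˣ} (h : ∀ x ∈ M, x * u ∈ M) :
    ∀ x ∈ M, x * (↑u⁻¹ : A) ∈ M := by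
  intro x hx
  let f : M →ₗ[A] M := (LinearMap.toSpanSingleton A A (u : A)).restrict h
  have hinj : Injective f := fun a b hab ↦
    Subtype.ext (u.isUnit.mul_left_injective (congrArg Subtype.val hab))
  obtain ⟨y, hy⟩ := IsArtinian.surjective_of_injective_endomorphism f hinj ⟨x, hx⟩
  have hyx : (y : A) * u = x := congrArg Subtype.val hy
  rw [← hyx, Units.mul_inv_cancel_right]
  exact y.2

theorem isUnit_add_of_map_mem_primeRadical {B : Type*} [Ring B] {ι : B →+* A} (hι : Injective ι)
    {u x : B} (hu : IsUnit u) (hx : ι x ∈ primeRadical A) : IsUnit (u + x) := by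
  obtain ⟨u, rfl⟩ := hu
  have hmem : ι (↑u⁻¹ * x) ∈ primeRadical A := by
    rw [map_mul]
    exact Ideal.mul_mem_left _ _ hx
  have hnil : IsNilpotent (↑u⁻¹ * x) :=
    (IsNilpotent.map_iff hι).1 (isNilpotent_of_mem_primeRadical hmem)
  simpa only [mul_add, mul_one, Units.mul_inv_cancel_left] using u.isUnit.mul hnil.isUnit_one_add

end Artinian

/-- `ψ : A → L` is a left Ore localization of `A` at `S`: the predicate on ring homomorphisms whose
bundled form is `OreLocModel`, freed from the universe of `A` so that it also applies to `gr Q`. -/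
structure IsOreLoc {A L : Type*} [Ring A] [Ring L] (S : Set A) (ψ : A →+* L) : Prop where
  isUnit : ∀ s ∈ S, IsUnit (ψ s)
  ker : ∀ a, ψ a = 0 ↔ ∃ s ∈ S, s * a = 0
  denom : ∀ l, ∃ s a, s ∈ S ∧ ψ s * l = ψ a

theorem OreLocModel.isOreLoc {A : Type u} [Ring A] {S : Set A} (m : OreLocModel S) :
    IsOreLoc S m.ψ :=
  ⟨m.isUnit, m.ker, m.denom⟩

section OreLocalization

variable {A : Type*} [Ring A] {S : Set A}

/-- A left Ore set as a submonoid, the form in which `OreLocalization` expects it. -/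
def IsLeftOreSubset.submonoid (hS : IsLeftOreSubset S) : Submonoid A where
  carrier := S
  mul_mem' {a b} ha hb := hS.2.1 a ha b hb
  one_mem' := hS.1

/-- The Ore set structure of a left denominator set, with numerators and denominators chosen
arbitrarily. -/
@[reducible] noncomputable def IsLeftDenominatorSet.oreSet (hS : IsLeftDenominatorSet S) :
    OreLocalization.OreSet hS.1.submonoid where
  ore_right_cancel r₁ r₂ s h := by
    obtain ⟨t, ht, h0⟩ := hS.2 (r₁ - r₂) s s.2 (by rw [sub_mul, h, sub_self])
    exact ⟨⟨t, ht⟩, by rwa [mul_sub, sub_eq_zero] at h0⟩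
  oreNum r s := (hS.1.2.2 s s.2 r).choose_spec.2.choose
  oreDenom r s := ⟨(hS.1.2.2 s s.2 r).choose, (hS.1.2.2 s s.2 r).choose_spec.1⟩
  ore_eq r s := (hS.1.2.2 s s.2 r).choose_spec.2.choose_spec

theorem IsLeftDenominatorSet.isOreLoc_numeratorRingHom (hS : IsLeftDenominatorSet S) :
    letI := hS.oreSet
    IsOreLoc S (OreLocalization.numeratorRingHom (R := A) (S := hS.1.submonoid)) := by
  let := hS.oreSet
  refine ⟨fun s hs ↦ OreLocalization.numerator_isUnit (S := hS.1.submonoid) ⟨s, hs⟩,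
    fun a ↦ ?_, fun l ↦ ?_⟩
  · change a /ₒ (1 : hS.1.submonoid) = 0 ↔ _
    rw [OreLocalization.zero_def, OreLocalization.oreDiv_eq_iff]
    constructor
    · rintro ⟨u, v, h, h'⟩
      simp only [Submonoid.smul_def, smul_eq_mul, mul_zero, Submonoid.coe_one, mul_one] at h h'
      exact ⟨u, u.2, by rw [h', ← h]⟩
    · rintro ⟨s, hs, h⟩
      exact ⟨⟨s, hs⟩, s, by simp [h], by simp⟩
  · induction l using OreLocalization.ind with
    | _ r s => exact ⟨s, r, s.2, OreLocalization.mul_cancel⟩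

theorem IsLeftDenominatorSet.nonempty_oreLocModel {A : Type u} [Ring A] {S : Set A}
    (hS : IsLeftDenominatorSet S) : Nonempty (OreLocModel S) :=
  letI := hS.oreSet
  let h := hS.isOreLoc_numeratorRingHom
  ⟨⟨OreLocalization hS.1.submonoid A, OreLocalization.numeratorRingHom, h.isUnit, h.ker, h.denom⟩⟩

theorem IsLeftDenominatorSet.exists_lift_oreLocalization (hS : IsLeftDenominatorSet S)
    {B : Type*} [Ring B] {χ : A →+* B} (hχ : ∀ s ∈ S, IsUnit (χ s)) :
    letI := hS.oreSet
    ∃ θ : OreLocalization hS.1.submonoid A →+* B,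
      ∀ a, θ (OreLocalization.numeratorRingHom a) = χ a := by
  let := hS.oreSet
  let χS : hS.1.submonoid →* Bˣ :=
    IsUnit.liftRight ((χ : A →* B).comp hS.1.submonoid.subtype) fun s ↦ hχ s s.2
  have hχS (s : hS.1.submonoid) : χ s = χS s := rfl
  exact ⟨OreLocalization.universalHom χ χS hχS, fun a ↦
    OreLocalization.universalHom_commutes χ χS hχS⟩

end OreLocalization

namespace IsOreLoc

variable {A L : Type*} [Ring A] [Ring L] {S : Set A} {ψ : A →+* L}

theorem isLeftDenominatorSet (hψ : IsOreLoc S ψ) (one_mem : 1 ∈ S)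
    (mul_mem : ∀ s ∈ S, ∀ t ∈ S, s * t ∈ S) : IsLeftDenominatorSet S := by
  refine ⟨⟨one_mem, mul_mem, fun s hs a ↦ ?_⟩, fun a s hs has ↦ (hψ.ker a).1 ?_⟩
  · obtain ⟨u, hu⟩ := hψ.isUnit s hs
    obtain ⟨t, b, ht, htb⟩ := hψ.denom (ψ a * ↑u⁻¹)
    have hker : ψ (t * a - b * s) = 0 := by
      rw [map_sub, map_mul, map_mul, ← htb, ← hu, mul_assoc, Units.inv_mul_cancel_right, sub_self]
    obtain ⟨w, hw, h0⟩ := (hψ.ker _).1 hker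
    exact ⟨w * t, mul_mem w hw t ht, w * b, by
      rwa [mul_sub, sub_eq_zero, ← mul_assoc, ← mul_assoc] at h0⟩
  · rw [← (hψ.isUnit s hs).mul_left_eq_zero, ← map_mul, has, map_zero]

section UniversalProperty

variable {B : Type*} [Ring B]

theorem injective_of_comp (hψ : IsOreLoc S ψ) {θ : L →+* B} (h : ∀ a, θ (ψ a) = 0 → ψ a = 0) :
    Injective θ := by
  refine (injective_iff_map_eq_zero θ).2 fun l hl ↦ ?_
  obtain ⟨s, a, hs, hsa⟩ := hψ.denom l
  have h0 : ψ a = 0 := h a (by rw [← hsa, map_mul, hl, mul_zero])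
  rwa [h0, (hψ.isUnit s hs).mul_right_eq_zero] at hsa

theorem bijective_of_comp (hψ : IsOreLoc S ψ) {θ : L →+* B} {χ : A →+* B} (hχ : IsOreLoc S χ)
    (h : ∀ a, θ (ψ a) = χ a) : Bijective θ := by
  refine ⟨hψ.injective_of_comp fun a ha ↦ ?_, fun b ↦ ?_⟩
  · rwa [h, hχ.ker, ← hψ.ker] at ha
  · obtain ⟨s, a, hs, hsa⟩ := hχ.denom b
    obtain ⟨u, hu⟩ := hψ.isUnit s hs
    refine ⟨↑u⁻¹ * ψ a, (hχ.isUnit s hs).mul_right_injective ?_⟩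
    calc χ s * θ (↑u⁻¹ * ψ a) = θ (u * (↑u⁻¹ * ψ a)) := by rw [← h s, ← map_mul, hu]
      _ = χ s * b := by rw [Units.mul_inv_cancel_left, h, hsa]

theorem exists_lift (hS : IsLeftDenominatorSet S) (hψ : IsOreLoc S ψ) {χ : A →+* B}
    (hχ : ∀ s ∈ S, IsUnit (χ s)) : ∃ θ : L →+* B, ∀ a, θ (ψ a) = χ a := by
  obtain ⟨θL, hL⟩ := hS.exists_lift_oreLocalization hψ.isUnit
  obtain ⟨θB, hB⟩ := hS.exists_lift_oreLocalization hχ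
  let := hS.oreSet
  let e := RingEquiv.ofBijective θL (hS.isOreLoc_numeratorRingHom.bijective_of_comp hψ hL)
  refine ⟨θB.comp (e.symm : L →+* _), fun a ↦ ?_⟩
  have he : e.symm (ψ a) = OreLocalization.numeratorRingHom a := e.symm_apply_eq.2 (hL a).symm
  rw [RingHom.comp_apply, RingHom.coe_coe, he, hB]

theorem nonempty_ringEquiv (hS : IsLeftDenominatorSet S) (hψ : IsOreLoc S ψ) {χ : A →+* B}
    (hχ : IsOreLoc S χ) : Nonempty (L ≃+* B) :=
  let ⟨_, h⟩ := hψ.exists_lift hS hχ.isUnit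
  ⟨RingEquiv.ofBijective _ (hψ.bijective_of_comp hχ h)⟩

end UniversalProperty

section Ideals

theorem map_comap (hψ : IsOreLoc S ψ) (J : Ideal L) : (J.comap ψ).map ψ = J := by
  refine le_antisymm Ideal.map_comap_le fun l hl ↦ ?_
  obtain ⟨s, a, hs, hsa⟩ := hψ.denom l
  rw [← Ideal.unit_mul_mem_iff_mem _ (hψ.isUnit s hs), hsa]
  refine Ideal.mem_map_of_mem ψ ?_
  rw [Ideal.mem_comap, ← hsa]
  exact J.mul_mem_left _ hl

theorem mem_map_iff (hS : IsLeftOreSubset S) (hψ : IsOreLoc S ψ) {I : Ideal A} {l : L} :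
    l ∈ I.map ψ ↔ ∃ s ∈ S, ∃ a ∈ I, ψ s * l = ψ a := by
  constructor
  · intro hl
    induction hl using Submodule.span_induction with
    | mem x hx =>
      obtain ⟨a, ha, rfl⟩ := hx
      exact ⟨1, hS.1, a, ha, by rw [map_one, one_mul]⟩
    | zero => exact ⟨1, hS.1, 0, I.zero_mem, by rw [mul_zero, map_zero]⟩
    | add x y _ _ hx hy =>
      obtain ⟨s, hs, a, ha, hsa⟩ := hx
      obtain ⟨t, ht, b, hb, htb⟩ := hy
      obtain ⟨u, hu, v, huv⟩ := hS.2.2 t ht s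
      refine ⟨u * s, hS.2.1 u hu s hs, u * a + v * b,
        I.add_mem (I.mul_mem_left u ha) (I.mul_mem_left v hb), ?_⟩
      calc ψ (u * s) * (x + y) = ψ (u * s) * x + ψ (v * t) * y := by rw [mul_add, huv]
        _ = ψ (u * a + v * b) := by simp only [map_mul, map_add, mul_assoc, hsa, htb]
    | smul q x _ hx =>
      obtain ⟨s, hs, a, ha, hsa⟩ := hx
      obtain ⟨t, b, ht, htb⟩ := hψ.denom q
      obtain ⟨u, hu, v, huv⟩ := hS.2.2 s hs b
      refine ⟨u * t, hS.2.1 u hu t ht, v * a, I.mul_mem_left v ha, ?_⟩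
      calc ψ (u * t) * (q • x) = ψ u * (ψ t * q) * x := by
            rw [map_mul, smul_eq_mul, mul_assoc, mul_assoc, mul_assoc]
        _ = ψ v * (ψ s * x) := by rw [htb, ← map_mul, huv, map_mul, mul_assoc]
        _ = ψ (v * a) := by rw [hsa, map_mul]
  · rintro ⟨s, hs, a, ha, hsa⟩
    rw [← Ideal.unit_mul_mem_iff_mem _ (hψ.isUnit s hs), hsa]
    exact Ideal.mem_map_of_mem ψ ha

theorem mul_map_mem_map (hS : IsLeftOreSubset S) (hψ : IsOreLoc S ψ) {I J : Ideal A} {b : A}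
    (h : ∀ a ∈ I, a * b ∈ J) {l : L} (hl : l ∈ I.map ψ) : l * ψ b ∈ J.map ψ := by
  obtain ⟨s, hs, a, ha, hsa⟩ := (hψ.mem_map_iff hS).1 hl
  exact (hψ.mem_map_iff hS).2 ⟨s, hs, a * b, h a ha, by rw [← mul_assoc, hsa, map_mul]⟩

theorem isTwoSided_map [IsArtinianRing L] (hS : IsLeftOreSubset S) (hψ : IsOreLoc S ψ)
    (I : Ideal A) [I.IsTwoSided] : (I.map ψ).IsTwoSided := by
  have hmul (b : A) : ∀ l ∈ I.map ψ, l * ψ b ∈ I.map ψ := fun l ↦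
    hψ.mul_map_mem_map hS fun a ha ↦ I.mul_mem_right b ha
  refine ⟨fun {l} q hl ↦ ?_⟩
  obtain ⟨t, b, ht, htb⟩ := hψ.denom q
  obtain ⟨u, hu⟩ := hψ.isUnit t ht
  have hq : q = ↑u⁻¹ * ψ b := by rw [← htb, ← hu, Units.inv_mul_cancel_left]
  rw [hq, ← mul_assoc]
  exact hmul b _ (mul_inv_mem_of_forall_mul_mem (fun x hx ↦ hu ▸ hmul t x hx) l hl)

theorem map_mul [IsArtinianRing L] (hS : IsLeftOreSubset S) (hψ : IsOreLoc S ψ)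
    (I J : Ideal A) [I.IsTwoSided] : (I * J).map ψ = I.map ψ * J.map ψ := by
  have := hψ.isTwoSided_map hS I
  refine le_antisymm (Ideal.map_le_iff_le_comap.2 (Ideal.mul_le.2 fun a ha b hb ↦ ?_))
    (Ideal.mul_le.2 fun x hx y hy ↦ ?_)
  · rw [Ideal.mem_comap, RingHom.map_mul]
    exact Ideal.mul_mem_mul (Ideal.mem_map_of_mem ψ ha) (Ideal.mem_map_of_mem ψ hb)
  · induction hy using Submodule.span_induction generalizing x with
    | mem y hy =>
      obtain ⟨b, hb, rfl⟩ := hy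
      exact hψ.mul_map_mem_map hS (fun a ha ↦ Ideal.mul_mem_mul ha hb) hx
    | zero => rw [mul_zero]; exact Ideal.zero_mem _
    | add y z _ _ hy hz => rw [mul_add]; exact Ideal.add_mem _ (hy x hx) (hz x hx)
    | smul q y _ hy =>
      rw [smul_eq_mul, ← mul_assoc]
      exact hy (x * q) (Ideal.mul_mem_right q _ hx)

theorem map_pow [IsArtinianRing L] (hS : IsLeftOreSubset S) (hψ : IsOreLoc S ψ)
    (I : Ideal A) [I.IsTwoSided] (k : ℕ) : (I ^ k).map ψ = I.map ψ ^ k := by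
  induction k with
  | zero => rw [Submodule.pow_zero, Submodule.pow_zero, Ideal.one_eq_top, Ideal.map_top,
      Ideal.one_eq_top]
  | succ k ih => rw [Submodule.pow_succ, Submodule.pow_succ, hψ.map_mul hS, ih]

open Polynomial in
theorem exists_C_mul_eq_map (hS : IsLeftOreSubset S) (hψ : IsOreLoc S ψ) (I : ℕ → Ideal A)
    (q : L[X]) (hq : ∀ i, q.coeff i ∈ (I i).map ψ) :
    ∃ s ∈ S, ∃ p : A[X], (∀ i, p.coeff i ∈ I i) ∧ C (ψ s) * q = p.map ψ := by
  rw [q.as_sum_support]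
  refine Finset.sum_induction _ (fun q ↦ ∃ s ∈ S, ∃ p : A[X], (∀ i, p.coeff i ∈ I i) ∧
    C (ψ s) * q = p.map ψ) ?_ ⟨1, hS.1, 0, fun i ↦ (I i).zero_mem, ?_⟩ fun i _ ↦ ?_
  · rintro q₁ q₂ ⟨s, hs, p₁, hp₁, h₁⟩ ⟨t, ht, p₂, hp₂, h₂⟩
    obtain ⟨u, hu, v, huv⟩ := hS.2.2 t ht s
    refine ⟨u * s, hS.2.1 u hu s hs, C u * p₁ + C v * p₂, fun i ↦ ?_, ?_⟩
    · rw [coeff_add, coeff_C_mul, coeff_C_mul]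
      exact (I i).add_mem ((I i).mul_mem_left u (hp₁ i)) ((I i).mul_mem_left v (hp₂ i))
    · calc C (ψ (u * s)) * (q₁ + q₂) = C (ψ (u * s)) * q₁ + C (ψ (v * t)) * q₂ := by
            rw [mul_add, huv]
        _ = (C u * p₁ + C v * p₂).map ψ := by
            simp only [RingHom.map_mul, mul_assoc, h₁, h₂, Polynomial.map_add, Polynomial.map_mul,
              map_C]
  · rw [mul_zero, Polynomial.map_zero]
  · obtain ⟨s, hs, a, ha, hsa⟩ := (hψ.mem_map_iff hS).1 (hq i)
    refine ⟨s, hs, monomial i a, fun j ↦ ?_, by rw [C_mul_monomial, hsa, map_monomial]⟩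
    rw [coeff_monomial]
    split_ifs with hij
    · exact hij ▸ ha
    · exact (I j).zero_mem

end Ideals

end IsOreLoc

section LeftQuotRing

variable {A L : Type*} [Ring A] [Ring L] {χ : A →+* L}

theorem isRegElem_one : IsRegElem (1 : A) := by simp [IsRegElem]

theorem IsRegElem.mul {a b : A} (ha : IsRegElem a) (hb : IsRegElem b) : IsRegElem (a * b) :=
  ⟨fun x hx ↦ hb.1 x (ha.1 _ (by rwa [← mul_assoc])),
    fun x hx ↦ ha.2 x (hb.2 _ (by rwa [mul_assoc]))⟩

theorem isRegElem_of_isUnit_map (hχ : Injective χ) {c : A} (hc : IsUnit (χ c)) : IsRegElem c := by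
  constructor <;> intro x hx <;> apply (injective_iff_map_eq_zero χ).1 hχ
  · rw [← hc.mul_right_eq_zero, ← map_mul, hx, map_zero]
  · rw [← hc.mul_left_eq_zero, ← map_mul, hx, map_zero]

theorem isLeftQuotRing_of_isArtinianRing [IsArtinianRing L] (hχ : Injective χ)
    (denom : ∀ l, ∃ s a, IsUnit (χ s) ∧ χ s * l = χ a) : IsLeftQuotRing χ := by
  refine ⟨hχ, fun c hc ↦ isUnit_of_mul_right_regular fun l hl ↦ ?_, fun l ↦ ?_⟩ <;>
    obtain ⟨s, a, hs, hsa⟩ := denom l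
  · have ha : a * c = 0 := hχ (by rw [map_mul, ← hsa, mul_assoc, hl, mul_zero, map_zero])
    rwa [hc.2 a ha, map_zero, hs.mul_right_eq_zero] at hsa
  · exact ⟨s, a, isRegElem_of_isUnit_map hχ hs, hsa⟩

namespace IsLeftQuotRing

theorem isOreLoc (h : IsLeftQuotRing χ) : IsOreLoc (regSet A) χ where
  isUnit := h.isUnit
  ker a := by
    rw [map_eq_zero_iff χ h.inj]
    exact ⟨fun ha ↦ ⟨1, isRegElem_one, by rw [ha, mul_zero]⟩, fun ⟨s, hs, hsa⟩ ↦ hs.1 a hsa⟩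
  denom := h.denom

theorem isLeftDenominatorSet (h : IsLeftQuotRing χ) : IsLeftDenominatorSet (regSet A) :=
  h.isOreLoc.isLeftDenominatorSet isRegElem_one fun _ hs _ ht ↦ hs.mul ht

theorem nonempty_ringEquiv (h : IsLeftQuotRing χ) {B : Type*} [Ring B] {χ' : A →+* B}
    (h' : IsLeftQuotRing χ') : Nonempty (L ≃+* B) :=
  h.isOreLoc.nonempty_ringEquiv h.isLeftDenominatorSet h'.isOreLoc

end IsLeftQuotRing

end LeftQuotRing

section ArtinianLeftQuotRing

variable {A Q : Type*} [Ring A] [Ring Q] {φ : A →+* Q}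

theorem IsNilpotentIdeal.comap {J : Ideal Q} (hJ : IsNilpotentIdeal J) (hφ : Injective φ) :
    IsNilpotentIdeal (J.comap φ) := by
  obtain ⟨k, hk⟩ := hJ
  refine ⟨k, le_bot_iff.1 ((ideal_pow_le_comap_pow le_rfl (k + 1)).trans fun x hx ↦ ?_)⟩
  rw [Ideal.mem_comap, hk] at hx
  exact (map_eq_zero_iff φ hφ).1 hx

variable [IsArtinianRing Q]

theorem IsOreLoc.isPrimeNC_comap {S : Set A} (hS : IsLeftOreSubset S) (h : IsOreLoc S φ)
    {P : Ideal Q} (hP : P.IsPrimeNC) : (P.comap φ).IsPrimeNC := by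
  refine ⟨Ideal.comap_ne_top φ hP.1, fun a ha r ↦ ?_, fun a b hab ↦ hP.2.2 _ _ fun q ↦ ?_⟩
  · rw [Ideal.mem_comap, RingHom.map_mul]
    exact hP.2.1 _ ha _
  · let I : Ideal A := (P.comap φ).colon (Ideal.span {b} : Set A)
    have ha : a ∈ I := Submodule.mem_colon.2 fun x hx ↦ by
      obtain ⟨r, rfl⟩ := Ideal.mem_span_singleton'.1 hx
      rw [smul_eq_mul, ← mul_assoc]
      exact hab r
    have := h.isTwoSided_map hS I
    have hmem : φ a * q ∈ I.map φ := Ideal.mul_mem_right _ _ (Ideal.mem_map_of_mem φ ha)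
    rw [← h.map_comap P]
    exact h.mul_map_mem_map hS
      (fun x hx ↦ Submodule.mem_colon.1 hx b (Ideal.mem_span_singleton_self b)) hmem

namespace IsLeftQuotRing

theorem comap_primeRadical (h : IsLeftQuotRing φ) :
    (primeRadical Q).comap φ = primeRadical A := by
  refine le_antisymm (isNilpotentIdeal_primeRadical.comap h.inj).le_primeRadical ?_
  rw [← Ideal.map_le_iff_le_comap]
  exact le_sInf fun P hP ↦ Ideal.map_le_iff_le_comap.2
    (primeRadical_le (h.isOreLoc.isPrimeNC_comap h.isLeftDenominatorSet.1 hP))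

theorem isNilpotentIdeal_primeRadical (h : IsLeftQuotRing φ) :
    IsNilpotentIdeal (primeRadical A) :=
  h.comap_primeRadical ▸ (_root_.isNilpotentIdeal_primeRadical (A := Q)).comap h.inj

theorem map_primeRadical_pow (h : IsLeftQuotRing φ) (i : ℕ) :
    (primeRadical A ^ i).map φ = primeRadical Q ^ i := by
  rw [h.isOreLoc.map_pow h.isLeftDenominatorSet.1, ← h.comap_primeRadical, h.isOreLoc.map_comap]

theorem regModN_iff (h : IsLeftQuotRing φ) {c : A} : RegModN c ↔ IsRegElem c := by
  have hrad {x : A} : x ∈ primeRadical A ↔ φ x ∈ primeRadical Q := by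
    rw [← h.comap_primeRadical, Ideal.mem_comap]
  constructor
  · intro hc
    refine isRegElem_of_isUnit_map h.inj
      (isUnit_of_mul_right_regular_mod_primeRadical fun q hq ↦ ?_)
    obtain ⟨s, a, hs, hsa⟩ := h.denom q
    have hac : a * c ∈ primeRadical A := by
      rw [hrad, map_mul, ← hsa, mul_assoc]
      exact Ideal.mul_mem_left _ _ hq
    rw [← Ideal.unit_mul_mem_iff_mem _ (h.isUnit s hs), hsa, ← hrad]
    exact hc.2 a hac
  · intro hc
    have hunit := h.isUnit c hc
    simp only [RegModN, hrad, map_mul]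
    refine ⟨fun x hx ↦ (Ideal.unit_mul_mem_iff_mem _ hunit).1 hx, fun x hx ↦ ?_⟩
    obtain ⟨u, hu⟩ := hunit
    rw [← hu] at hx
    simpa only [Units.mul_inv_cancel_right] using Ideal.mul_mem_right (↑u⁻¹ : Q) _ hx

end IsLeftQuotRing

end ArtinianLeftQuotRing

section ReesRing

open Polynomial

variable {A B : Type*} [Ring A] [Ring B]

/-- The Rees ring `⊕ Iⁱ Xⁱ` of a two-sided ideal `I`, a noncommutative analogue of Mathlib's
`reesAlgebra`. The associated graded ring of the `I`-adic filtration is one of its quotients. -/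
def reesRing (I : Ideal A) [I.IsTwoSided] : Subring A[X] where
  carrier := {p | ∀ i, p.coeff i ∈ I ^ i}
  zero_mem' i := (I ^ i).zero_mem
  one_mem' i := by
    rw [coeff_one]
    split_ifs with hi
    · exact hi ▸ mem_ideal_pow_zero I 1
    · exact zero_mem _
  add_mem' hp hq i := by
    rw [coeff_add]
    exact add_mem (hp i) (hq i)
  neg_mem' hp i := by
    rw [coeff_neg]
    exact neg_mem (hp i)
  mul_mem' hp hq i := by
    rw [coeff_mul]
    refine sum_mem fun x hx ↦ ?_
    rw [← Finset.HasAntidiagonal.mem_antidiagonal.1 hx]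
    exact mul_mem_ideal_pow_add (hp x.1) (hq x.2)

namespace reesRing

variable (I : Ideal A) [I.IsTwoSided]

/-- The term `x Xⁱ` of the Rees ring, for `x ∈ Iⁱ`. -/
noncomputable def monomial (i : ℕ) : ↥(I ^ i) →+ reesRing I where
  toFun x := ⟨Polynomial.monomial i (x : A), fun j ↦ by
    rw [coeff_monomial]
    split_ifs with hij
    · exact hij ▸ x.2
    · exact zero_mem _⟩
  map_zero' := Subtype.ext (monomial_zero_right i)
  map_add' x y := Subtype.ext ((Polynomial.monomial i).map_add (x : A) y)

/-- The inclusion of the base ring into the Rees ring in degree `0`. -/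
noncomputable def C : A →+* reesRing I :=
  Polynomial.C.codRestrict _ fun a ↦ (monomial I 0 ⟨a, mem_ideal_pow_zero I a⟩).2

/-- The projection of the Rees ring onto its degree `0` part. -/
noncomputable def constCoeff : reesRing I →+* A :=
  Polynomial.constantCoeff.comp (reesRing I).subtype

variable {I}

@[simp]
theorem coe_monomial (i : ℕ) (x : ↥(I ^ i)) :
    (monomial I i x : A[X]) = Polynomial.monomial i (x : A) := rfl

@[simp]
theorem coe_C (a : A) : (C I a : A[X]) = Polynomial.C a := rfl

@[simp]
theorem constCoeff_apply (p : reesRing I) : constCoeff I p = (p : A[X]).coeff 0 := rfl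

theorem constCoeff_surjective : Surjective (constCoeff I) :=
  fun a ↦ ⟨C I a, coeff_C_zero⟩

theorem C_mul_monomial (a : A) (i : ℕ) (x : ↥(I ^ i)) :
    C I a * monomial I i x = monomial I i (a • x) :=
  Subtype.ext Polynomial.C_mul_monomial

theorem monomial_mul_monomial {i j : ℕ} (x : ↥(I ^ i)) (y : ↥(I ^ j)) :
    monomial I i x * monomial I j y =
      monomial I (i + j) ⟨x * y, mul_mem_ideal_pow_add x.2 y.2⟩ :=
  Subtype.ext (Polynomial.monomial_mul_monomial i j (x : A) y)

theorem coeff_sum_monomial {N j : ℕ} (x : ∀ i, ↥(I ^ i)) (hj : j < N) :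
    ((∑ i ∈ Finset.range N, monomial I i (x i) : reesRing I) : A[X]).coeff j = x j := by
  simp only [AddSubmonoidClass.coe_finsetSum, finsetSum_coeff, coe_monomial, coeff_monomial,
    Finset.sum_ite_eq', Finset.mem_range, hj, if_true]

theorem as_sum_range (p : reesRing I) :
    p = ∑ i ∈ Finset.range ((p : A[X]).natDegree + 1), monomial I i ⟨_, p.2 i⟩ :=
  Subtype.ext (by simpa using (p : A[X]).as_sum_range)

theorem induction_on {motive : reesRing I → Prop} (p : reesRing I)
    (monomial : ∀ i x, motive (monomial I i x))
    (add : ∀ p q, motive p → motive q → motive (p + q)) : motive p := by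
  rw [as_sum_range p]
  exact Finset.sum_induction _ _ add (map_zero (reesRing.monomial I 0) ▸ monomial 0 0)
    fun i _ ↦ monomial i _

/-- The ring homomorphism of Rees rings induced by applying `φ` to coefficients. -/
noncomputable def map (φ : A →+* B) {J : Ideal B} [J.IsTwoSided] (h : I ≤ J.comap φ) :
    reesRing I →+* reesRing J :=
  ((Polynomial.mapRingHom φ).comp (reesRing I).subtype).codRestrict _ fun p i ↦ by
    rw [RingHom.comp_apply, coe_mapRingHom, coeff_map]
    exact ideal_pow_le_comap_pow h i (p.2 i)

@[simp]
theorem coe_map (φ : A →+* B) {J : Ideal B} [J.IsTwoSided] (h : I ≤ J.comap φ)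
    (p : reesRing I) : (map φ h p : B[X]) = (p : A[X]).map φ := rfl

theorem map_C (φ : A →+* B) {J : Ideal B} [J.IsTwoSided] (h : I ≤ J.comap φ) (a : A) :
    map φ h (C I a) = C J (φ a) :=
  Subtype.ext (Polynomial.map_C φ)

variable (I) in
/-- The left ideal of the Rees ring cut out by prescribing an ideal `F i` for the coefficients in
each degree `i`. -/
def coeffIdeal (F : ℕ → Ideal A) (hF : ∀ i j, I ^ i * F j ≤ F (i + j)) :
    Ideal (reesRing I) where
  carrier := {p | ∀ i, (p : A[X]).coeff i ∈ F i}
  zero_mem' i := (F i).zero_mem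
  add_mem' hp hq i := by
    rw [Subring.coe_add, coeff_add]
    exact add_mem (hp i) (hq i)
  smul_mem' p q hq i := by
    rw [smul_eq_mul, Subring.coe_mul, coeff_mul]
    refine sum_mem fun x hx ↦ ?_
    rw [← Finset.HasAntidiagonal.mem_antidiagonal.1 hx]
    exact hF _ _ (Ideal.mul_mem_mul (p.2 x.1) (hq x.2))

variable (I) in
/-- The left ideal of the polynomials in the Rees ring all of whose coefficients lie in `J`. -/
def constIdeal (J : Ideal A) : Ideal (reesRing I) :=
  coeffIdeal I (fun _ ↦ J) fun _ _ ↦ Ideal.mul_le_right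

variable (I) in
/-- The ideal `⊕ Iⁱ⁺¹ Xⁱ` of the Rees ring, the quotient by which is the associated graded ring. -/
def shiftIdeal : Ideal (reesRing I) :=
  coeffIdeal I (fun i ↦ I ^ (i + 1)) fun i j ↦ by
    rw [add_assoc, ← Ideal.IsTwoSided.pow_add]

theorem mem_constIdeal {J : Ideal A} {p : reesRing I} :
    p ∈ constIdeal I J ↔ ∀ i, (p : A[X]).coeff i ∈ J := Iff.rfl

theorem mem_shiftIdeal {p : reesRing I} :
    p ∈ shiftIdeal I ↔ ∀ i, (p : A[X]).coeff i ∈ I ^ (i + 1) := Iff.rfl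

instance shiftIdeal_isTwoSided : (shiftIdeal I).IsTwoSided where
  mul_mem_of_left {p} q hp := mem_shiftIdeal.2 fun i ↦ by
    rw [Subring.coe_mul, coeff_mul]
    refine sum_mem fun x hx ↦ ?_
    rw [← Finset.HasAntidiagonal.mem_antidiagonal.1 hx, add_right_comm]
    exact mul_mem_ideal_pow_add (hp x.1) (q.2 x.2)

theorem monomial_mem_shiftIdeal_iff {i : ℕ} {x : ↥(I ^ i)} :
    monomial I i x ∈ shiftIdeal I ↔ (x : A) ∈ I ^ (i + 1) := by
  refine ⟨fun h ↦ by simpa using mem_shiftIdeal.1 h i, fun h ↦ mem_shiftIdeal.2 fun j ↦ ?_⟩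
  rw [coe_monomial, coeff_monomial]
  split_ifs with hij
  · exact hij ▸ h
  · exact zero_mem _

open Classical in
variable (I) in
/-- The class of `x ∈ Iⁱ` in degree `i` of the associated graded ring of the `I`-adic filtration,
realized as a quotient of the Rees ring; elements outside `Iⁱ` are sent to `0`. -/
noncomputable def gradedMk (i : ℕ) (x : A) : reesRing I ⧸ shiftIdeal I :=
  if hx : x ∈ I ^ i then Ideal.Quotient.mk _ (monomial I i ⟨x, hx⟩) else 0

theorem gradedMk_of_mem {i : ℕ} {x : A} (hx : x ∈ I ^ i) :
    gradedMk I i x = Ideal.Quotient.mk _ (monomial I i ⟨x, hx⟩) :=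
  dif_pos hx

theorem sum_gradedMk {x : ℕ → A} (hx : ∀ i, x i ∈ I ^ i) (N : ℕ) :
    ∑ i ∈ Finset.range N, gradedMk I i (x i) =
      Ideal.Quotient.mk _ (∑ i ∈ Finset.range N, monomial I i ⟨x i, hx i⟩) := by
  rw [map_sum]
  exact Finset.sum_congr rfl fun i _ ↦ gradedMk_of_mem (hx i)

theorem gradedMk_eq_zero_iff {i : ℕ} {x : A} (hx : x ∈ I ^ i) :
    gradedMk I i x = 0 ↔ x ∈ I ^ (i + 1) := by
  rw [gradedMk_of_mem hx, Ideal.Quotient.eq_zero_iff_mem, monomial_mem_shiftIdeal_iff]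

theorem constIdeal_mul_le (J K : Ideal A) :
    constIdeal I J * constIdeal I K ≤ constIdeal I (J * K) :=
  Ideal.mul_le.2 fun p hp q hq ↦ mem_constIdeal.2 fun i ↦ by
    rw [Subring.coe_mul, coeff_mul]
    exact sum_mem fun x _ ↦
      Ideal.mul_mem_mul (mem_constIdeal.1 hp x.1) (mem_constIdeal.1 hq x.2)

theorem constIdeal_pow_le (J : Ideal A) (k : ℕ) :
    constIdeal I J ^ k ≤ constIdeal I (J ^ k) := by
  induction k with
  | zero => exact fun p _ ↦ mem_constIdeal.2 fun i ↦ mem_ideal_pow_zero J _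
  | succ k ih =>
    rw [Submodule.pow_succ, Submodule.pow_succ]
    exact (Ideal.mul_mono_left ih).trans (constIdeal_mul_le _ _)

theorem isNilpotentIdeal_constIdeal {J : Ideal A} (hJ : IsNilpotentIdeal J) :
    IsNilpotentIdeal (constIdeal I J) := by
  obtain ⟨k, hk⟩ := hJ
  refine ⟨k, le_bot_iff.1 ((constIdeal_pow_le J (k + 1)).trans fun p hp ↦ ?_)⟩
  simp only [mem_constIdeal, hk, Submodule.mem_bot] at hp
  exact Subtype.ext (Polynomial.ext hp)

theorem ker_constCoeff_le : RingHom.ker (constCoeff I) ≤ constIdeal I I := by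
  refine fun p hp ↦ mem_constIdeal.2 ?_
  rintro (_ | i)
  · rw [show (p : A[X]).coeff 0 = 0 from hp]
    exact zero_mem _
  · exact Ideal.pow_le_self i.succ_ne_zero (p.2 (i + 1))

end reesRing

end ReesRing

namespace GradedModel

open Polynomial

section OfRees

variable {R : Type u} [Ring R] (d : GradedModel R)

theorem emb_zero (i : ℕ) : d.emb i 0 = 0 :=
  (d.zero_iff i 0 (zero_mem _)).2 (zero_mem _)

theorem sum_emb_monomial (i : ℕ) (x : R) : (monomial i x).sum d.emb = d.emb i x :=
  sum_monomial_index x d.emb (d.emb_zero i)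

theorem sum_emb_add (p q : reesRing (primeRadical R)) :
    (p + q : R[X]).sum d.emb = (p : R[X]).sum d.emb + (q : R[X]).sum d.emb := by
  let N := (p : R[X]).natDegree + (q : R[X]).natDegree + 1
  have hN : (p + q : R[X]).natDegree < N :=
    Nat.lt_succ_of_le ((natDegree_add_le _ _).trans (max_le (Nat.le_add_right _ _)
      (Nat.le_add_left _ _)))
  rw [sum_over_range' _ d.emb_zero N hN, sum_over_range' _ d.emb_zero N (by omega),
    sum_over_range' _ d.emb_zero N (by omega), ← Finset.sum_add_distrib]
  exact Finset.sum_congr rfl fun i _ ↦ by rw [coeff_add, d.add i _ _ (p.2 i) (q.2 i)]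

theorem sum_emb_mul (p q : reesRing (primeRadical R)) :
    (p * q : R[X]).sum d.emb = (p : R[X]).sum d.emb * (q : R[X]).sum d.emb := by
  induction p using reesRing.induction_on with
  | add p₁ p₂ h₁ h₂ =>
    rw [Subring.coe_add, add_mul, ← Subring.coe_mul, ← Subring.coe_mul, sum_emb_add, sum_emb_add,
      add_mul, Subring.coe_mul, Subring.coe_mul, h₁, h₂]
  | monomial i x =>
    induction q using reesRing.induction_on with
    | add q₁ q₂ h₁ h₂ =>
      rw [Subring.coe_add, mul_add, ← Subring.coe_mul, ← Subring.coe_mul, sum_emb_add, sum_emb_add,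
        mul_add, Subring.coe_mul, Subring.coe_mul, h₁, h₂]
    | monomial j y =>
      rw [reesRing.coe_monomial, reesRing.coe_monomial, monomial_mul_monomial, sum_emb_monomial,
        sum_emb_monomial, sum_emb_monomial, d.mul i j _ _ x.2 y.2]

/-- The canonical surjection from the Rees ring of the prime radical onto `gr R`, taking `x Xⁱ` to
the class of `x` in degree `i`. -/
noncomputable def ofRees : reesRing (primeRadical R) →+* d.G where
  toFun p := (p : R[X]).sum d.emb
  map_zero' := Polynomial.sum_zero_index d.emb
  map_one' := (d.sum_emb_monomial 0 1).trans d.one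
  map_add' := d.sum_emb_add
  map_mul' := d.sum_emb_mul

@[simp]
theorem ofRees_monomial (i : ℕ) (x : ↥(primeRadical R ^ i)) :
    d.ofRees (reesRing.monomial _ i x) = d.emb i x :=
  d.sum_emb_monomial i x

@[simp]
theorem ofRees_C (a : R) : d.ofRees (reesRing.C _ a) = d.emb 0 a :=
  d.sum_emb_monomial 0 a

theorem ofRees_eq_sum_range (p : reesRing (primeRadical R)) {N : ℕ}
    (hN : (p : R[X]).natDegree < N) :
    d.ofRees p = ∑ i ∈ Finset.range N, d.emb i ((p : R[X]).coeff i) :=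
  sum_over_range' _ d.emb_zero N hN

theorem ofRees_surjective : Surjective d.ofRees := fun g ↦ by
  obtain ⟨N, x, hx, rfl⟩ := d.gen g
  exact ⟨∑ i ∈ Finset.range N, reesRing.monomial _ i ⟨x i, hx i⟩, by
    simp only [map_sum, ofRees_monomial]⟩

theorem ofRees_eq_zero_iff {p : reesRing (primeRadical R)} :
    d.ofRees p = 0 ↔ ∀ i, (p : R[X]).coeff i ∈ primeRadical R ^ (i + 1) := by
  refine ⟨fun hp i ↦ ?_, fun hp ↦ Finset.sum_eq_zero fun i _ ↦ (d.zero_iff i _ (p.2 i)).2 (hp i)⟩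
  rw [d.ofRees_eq_sum_range p (N := (p : R[X]).natDegree + i + 1) (by omega)] at hp
  exact (d.zero_iff i _ (p.2 i)).1 (d.indep _ _ p.2 hp i (by omega))

end OfRees

/-- The ring homomorphism `gr R → gr R'` induced by a ring homomorphism compatible with the prime
radicals. -/
noncomputable def map {R : Type u} {R' : Type v} [Ring R] [Ring R'] (d : GradedModel R)
    (d' : GradedModel R') (φ : R →+* R') (h : primeRadical R ≤ (primeRadical R').comap φ) :
    d.G →+* d'.G :=
  RingHom.liftOfSurjective d.ofRees d.ofRees_surjective ⟨d'.ofRees.comp (reesRing.map φ h),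
    fun p hp ↦ d'.ofRees_eq_zero_iff.2 fun i ↦ by
      rw [reesRing.coe_map, coeff_map]
      exact ideal_pow_le_comap_pow h (i + 1) (d.ofRees_eq_zero_iff.1 hp i)⟩

theorem map_ofRees {R : Type u} {R' : Type v} [Ring R] [Ring R'] (d : GradedModel R)
    (d' : GradedModel R') (φ : R →+* R') (h : primeRadical R ≤ (primeRadical R').comap φ)
    (p : reesRing (primeRadical R)) :
    d.map d' φ h (d.ofRees p) = d'.ofRees (reesRing.map φ h p) :=
  RingHom.liftOfRightInverse_comp_apply _ _ _ _ p

theorem map_emb_zero {R : Type u} {R' : Type v} [Ring R] [Ring R'] (d : GradedModel R)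
    (d' : GradedModel R') (φ : R →+* R') (h : primeRadical R ≤ (primeRadical R').comap φ) (a : R) :
    d.map d' φ h (d.emb 0 a) = d'.ofRees (reesRing.C _ (φ a)) := by
  rw [← d.ofRees_C, map_ofRees, reesRing.map_C]

theorem nonempty (R : Type u) [Ring R] : Nonempty (GradedModel R) := by
  refine ⟨⟨reesRing (primeRadical R) ⧸ reesRing.shiftIdeal (primeRadical R),
    reesRing.gradedMk (primeRadical R), fun i x y hx hy ↦ ?_,
    fun i x hx ↦ reesRing.gradedMk_eq_zero_iff hx, fun i j x y hx hy ↦ ?_,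
    reesRing.gradedMk_of_mem (mem_ideal_pow_zero _ 1), fun g ↦ ?_, fun N x hx h i hi ↦ ?_⟩⟩
  · rw [reesRing.gradedMk_of_mem hx, reesRing.gradedMk_of_mem hy,
      reesRing.gradedMk_of_mem (add_mem hx hy), ← map_add, ← map_add]
    rfl
  · rw [reesRing.gradedMk_of_mem hx, reesRing.gradedMk_of_mem hy,
      reesRing.gradedMk_of_mem (mul_mem_ideal_pow_add hx hy), ← map_mul,
      reesRing.monomial_mul_monomial]
  · obtain ⟨p, rfl⟩ := Ideal.Quotient.mk_surjective g
    refine ⟨(p : R[X]).natDegree + 1, _, p.2, ?_⟩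
    rw [reesRing.sum_gradedMk p.2]
    exact congrArg _ (reesRing.as_sum_range p)
  · rw [reesRing.sum_gradedMk hx, Ideal.Quotient.eq_zero_iff_mem] at h
    rw [reesRing.gradedMk_eq_zero_iff (hx i)]
    simpa only [reesRing.coeff_sum_monomial _ hi] using reesRing.mem_shiftIdeal.1 h i

section Artinian

variable {Q : Type u} [Ring Q] (d : GradedModel Q)

/-- `gr Q` as a left `Q`-module, through its degree `0` part. -/
@[reducible]
noncomputable def module : Module Q d.G :=
  Module.compHom d.G (d.ofRees.comp (reesRing.C _))

/-- The `Q`-linear map `nⁱ → gr Q` onto the homogeneous part of degree `i`. -/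
noncomputable def embLinear (i : ℕ) :
    letI := d.module
    ↥(primeRadical Q ^ i) →ₗ[Q] d.G :=
  letI := d.module
  { toFun x := d.ofRees (reesRing.monomial _ i x)
    map_add' x y := by rw [map_add, map_add]
    map_smul' a x := by rw [← reesRing.C_mul_monomial, map_mul]; rfl }

theorem isArtinianRing [IsArtinianRing Q] : IsArtinianRing d.G := by
  let := d.module
  have : IsScalarTower Q d.G d.G := ⟨fun _ _ _ ↦ mul_assoc _ _ _⟩
  obtain ⟨k, hk⟩ := isNilpotentIdeal_primeRadical (A := Q)
  let f : ((i : Fin (k + 1)) → ↥(primeRadical Q ^ (i : ℕ))) →ₗ[Q] d.G :=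
    ∑ i : Fin (k + 1), (d.embLinear i).comp (LinearMap.proj i)
  have hf : Surjective f := fun g ↦ by
    obtain ⟨p, rfl⟩ := d.ofRees_surjective g
    have hdeg : (p : Q[X]).natDegree < k + 1 := Nat.lt_succ_of_le
      (natDegree_le_iff_coeff_eq_zero.2 fun i hi ↦ by
        have := Ideal.pow_le_pow_right hi (p.2 i)
        rwa [hk, Submodule.mem_bot] at this)
    refine ⟨fun i ↦ ⟨_, p.2 i⟩, ?_⟩
    rw [d.ofRees_eq_sum_range p hdeg, Finset.sum_range, LinearMap.sum_apply]
    exact Finset.sum_congr rfl fun i _ ↦ d.ofRees_monomial _ _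
  have : IsArtinian Q d.G := isArtinian_of_surjective _ f hf
  exact isArtinian_of_tower Q this

end Artinian

end GradedModel

section GradedRegSet

variable {R : Type u} [Ring R] (d : GradedModel R)

theorem one_mem_gradedRegSet : 1 ∈ gradedRegSet d :=
  ⟨1, regModN_one, d.one.symm⟩

theorem mul_mem_gradedRegSet :
    ∀ s ∈ gradedRegSet d, ∀ t ∈ gradedRegSet d, s * t ∈ gradedRegSet d := by
  rintro _ ⟨a, ha, rfl⟩ _ ⟨b, hb, rfl⟩
  exact ⟨a * b, ha.mul hb, d.mul 0 0 a b (mem_ideal_pow_zero _ a) (mem_ideal_pow_zero _ b)⟩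

end GradedRegSet

namespace IsLeftQuotRing

variable {R : Type u} [Ring R]

theorem isOreLoc_gradedMap {Q : Type v} [Ring Q] [IsArtinianRing Q] {φ : R →+* Q}
    (h : IsLeftQuotRing φ) (d : GradedModel R) (dQ : GradedModel Q) :
    IsOreLoc (gradedRegSet d) (d.map dQ φ h.comap_primeRadical.ge) := by
  have hS := h.isLeftDenominatorSet.1
  have hunit : ∀ s ∈ gradedRegSet d, IsUnit (d.map dQ φ h.comap_primeRadical.ge s) := by
    rintro _ ⟨c, hc, rfl⟩
    rw [d.map_emb_zero]
    exact (h.isUnit c (h.regModN_iff.1 hc)).map (dQ.ofRees.comp (reesRing.C _))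
  refine ⟨hunit, fun g ↦ ⟨fun hg ↦ ?_, ?_⟩, fun l ↦ ?_⟩
  · obtain ⟨p, rfl⟩ := d.ofRees_surjective g
    rw [d.map_ofRees, dQ.ofRees_eq_zero_iff] at hg
    obtain ⟨s, hs, p', hp', hmap⟩ := h.isOreLoc.exists_C_mul_eq_map hS
      (fun i ↦ primeRadical R ^ (i + 1)) (reesRing.map φ h.comap_primeRadical.ge p)
      fun i ↦ by rw [h.map_primeRadical_pow]; exact hg i
    rw [reesRing.coe_map, ← Polynomial.map_C, ← Polynomial.map_mul] at hmap
    refine ⟨_, ⟨s, h.regModN_iff.2 hs, rfl⟩, ?_⟩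
    rw [← d.ofRees_C, ← map_mul, d.ofRees_eq_zero_iff, Subring.coe_mul, reesRing.coe_C,
      Polynomial.map_injective φ h.inj hmap]
    exact hp'
  · rintro ⟨s, hs, hsg⟩
    rw [← (hunit s hs).mul_right_eq_zero, ← map_mul, hsg, map_zero]
  · obtain ⟨q, rfl⟩ := dQ.ofRees_surjective l
    obtain ⟨s, hs, p, hp, hmap⟩ := h.isOreLoc.exists_C_mul_eq_map hS
      (fun i ↦ primeRadical R ^ i) q fun i ↦ by rw [h.map_primeRadical_pow]; exact q.2 i
    refine ⟨d.emb 0 s, d.ofRees ⟨p, hp⟩, ⟨s, h.regModN_iff.2 hs, rfl⟩, ?_⟩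
    rw [d.map_emb_zero, d.map_ofRees, ← map_mul]
    exact congrArg dQ.ofRees (Subtype.ext hmap)

section

variable {Q : Type u} [Ring Q] [IsArtinianRing Q] {φ : R →+* Q}

theorem isLeftDenominatorSet_gradedRegSet (h : IsLeftQuotRing φ) (d : GradedModel R) :
    IsLeftDenominatorSet (gradedRegSet d) :=
  let ⟨dQ⟩ := GradedModel.nonempty Q
  (h.isOreLoc_gradedMap d dQ).isLeftDenominatorSet (one_mem_gradedRegSet d)
    (mul_mem_gradedRegSet d)

theorem exists_oreLocModel_isArtinianRing (h : IsLeftQuotRing φ) (d : GradedModel R) :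
    ∃ m : OreLocModel (gradedRegSet d), IsArtinianRing m.L :=
  let ⟨dQ⟩ := GradedModel.nonempty Q
  let hψ := h.isOreLoc_gradedMap d dQ
  ⟨⟨dQ.G, _, hψ.isUnit, hψ.ker, hψ.denom⟩, dQ.isArtinianRing⟩

end

end IsLeftQuotRing

section ArtinianCriterion

open Polynomial

variable {R : Type u} [Ring R] {d : GradedModel R}

theorem isLeftDenominatorSet_regModN (hd : IsLeftDenominatorSet (gradedRegSet d))
    (hn : IsNilpotentIdeal (primeRadical R)) (hC : ∀ c : R, RegModN c → IsRegElem c) :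
    IsLeftDenominatorSet {c : R | RegModN c} := by
  refine ⟨⟨regModN_one, fun s hs t ht ↦ hs.mul ht, fun c hc ↦ ?_⟩,
    fun a s hs has ↦ ⟨1, regModN_one, by rw [one_mul]; exact (hC s hs).2 a has⟩⟩
  refine hn.induction_on_pow ⟨1, regModN_one, 0, by rw [mul_zero, zero_mul]⟩ fun i ih r hr ↦ ?_
  obtain ⟨_, ⟨t, ht, rfl⟩, b, hb⟩ := hd.1.2.2 _ ⟨c, hc, rfl⟩ (d.emb i r)
  obtain ⟨p, rfl⟩ := d.ofRees_surjective b
  have hzero : d.ofRees (reesRing.C _ t * reesRing.monomial _ i ⟨r, hr⟩ - p * reesRing.C _ c)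
      = 0 := by
    rw [map_sub, map_mul, map_mul, d.ofRees_C, d.ofRees_C, d.ofRees_monomial, hb, sub_self]
  have hmem : t * r - (p : R[X]).coeff i * c ∈ primeRadical R ^ (i + 1) := by
    simpa using d.ofRees_eq_zero_iff.1 hzero i
  obtain ⟨t', ht', b', hb'⟩ := ih _ hmem
  refine ⟨t' * t, ht'.mul ht, t' * (p : R[X]).coeff i + b', ?_⟩
  rw [add_mul, ← hb']
  noncomm_ring

/-- The left ideal of `gr R` spanned by the leading forms of the elements of `I`: the image of the
polynomials in the Rees ring with all coefficients in `I`. -/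
noncomputable def GradedModel.symbolIdeal (d : GradedModel R) (I : Ideal R) : Ideal d.G :=
  (reesRing.constIdeal (primeRadical R) I).map d.ofRees

theorem GradedModel.symbolIdeal_mono : Monotone d.symbolIdeal := fun _ _ h ↦
  Ideal.map_mono fun _ hp i ↦ h (reesRing.mem_constIdeal.1 hp i)

theorem GradedModel.emb_mem_symbolIdeal {I : Ideal R} {i : ℕ} {x : R}
    (hx : x ∈ primeRadical R ^ i) (hxI : x ∈ I) : d.emb i x ∈ d.symbolIdeal I := by
  rw [← d.ofRees_monomial i ⟨x, hx⟩]
  refine Ideal.mem_map_of_mem _ (reesRing.mem_constIdeal.2 fun j ↦ ?_)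
  rw [reesRing.coe_monomial, coeff_monomial]
  split_ifs
  · exact hxI
  · exact I.zero_mem

namespace IsOreLoc

variable {L : Type*} [Ring L] {ψ : d.G →+* L}

theorem exists_mul_sub_mem_of_map_emb_mem (hd : IsLeftDenominatorSet (gradedRegSet d))
    (hψ : IsOreLoc (gradedRegSet d) ψ) {I : Ideal R} {i : ℕ} {x : R}
    (hx : x ∈ primeRadical R ^ i) (h : ψ (d.emb i x) ∈ (d.symbolIdeal I).map ψ) :
    ∃ s, RegModN s ∧ ∃ y ∈ I, s * x - y ∈ primeRadical R ^ (i + 1) := by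
  obtain ⟨_, ⟨s, hs, rfl⟩, g, hg, hsg⟩ := (hψ.mem_map_iff hd.1).1 h
  obtain ⟨p, hp, rfl⟩ := (Ideal.mem_map_iff_of_surjective _ d.ofRees_surjective).1 hg
  rw [← d.ofRees_C, ← d.ofRees_monomial i ⟨x, hx⟩, ← RingHom.map_mul, ← RingHom.map_mul,
    ← sub_eq_zero, ← map_sub, ← map_sub, hψ.ker] at hsg
  obtain ⟨_, ⟨t, ht, rfl⟩, h0⟩ := hsg
  rw [← d.ofRees_C, ← RingHom.map_mul, d.ofRees_eq_zero_iff] at h0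
  refine ⟨t * s, ht.mul hs, t * (p : R[X]).coeff i,
    I.mul_mem_left t (reesRing.mem_constIdeal.1 hp i), ?_⟩
  simpa [mul_sub, mul_assoc] using h0 i

theorem le_of_map_symbolIdeal_le {Q : Type*} [Ring Q]
    (hd : IsLeftDenominatorSet (gradedRegSet d)) (hn : IsNilpotentIdeal (primeRadical R))
    (hψ : IsOreLoc (gradedRegSet d) ψ) {φ : R →+* Q} (hφ : IsOreLoc {c : R | RegModN c} φ)
    {J J' : Ideal Q} (hJ : J ≤ J')
    (h : (d.symbolIdeal (J'.comap φ)).map ψ ≤ (d.symbolIdeal (J.comap φ)).map ψ) : J' ≤ J := by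
  rw [← hφ.map_comap J', Ideal.map_le_iff_le_comap]
  refine hn.induction_on_pow (fun _ ↦ zero_mem _) fun i ih x hx hxJ' ↦ ?_
  obtain ⟨s, hs, y, hy, hsxy⟩ := hψ.exists_mul_sub_mem_of_map_emb_mem hd hx
    (h (Ideal.mem_map_of_mem ψ (GradedModel.emb_mem_symbolIdeal hx hxJ')))
  have hsx : s * x ∈ J.comap φ := (Submodule.sub_mem_iff_left _ hy).1 <|
    ih _ hsxy (sub_mem (Ideal.mul_mem_left _ s hxJ') (Ideal.comap_mono hJ hy))
  rwa [Ideal.mem_comap, RingHom.map_mul, Ideal.unit_mul_mem_iff_mem _ (hφ.isUnit s hs)] at hsx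

end IsOreLoc

theorem isArtinianRing_of_isOreLoc_gradedRegSet {L Q : Type*} [Ring L] [Ring Q]
    [IsArtinianRing L] (hd : IsLeftDenominatorSet (gradedRegSet d))
    (hn : IsNilpotentIdeal (primeRadical R)) {ψ : d.G →+* L}
    (hψ : IsOreLoc (gradedRegSet d) ψ) {φ : R →+* Q} (hφ : IsOreLoc {c : R | RegModN c} φ) :
    IsArtinianRing Q := by
  have hmono : StrictMono fun J : Ideal Q ↦ (d.symbolIdeal (J.comap φ)).map ψ := fun J J' h ↦
    lt_of_le_not_ge (Ideal.map_mono (GradedModel.symbolIdeal_mono (Ideal.comap_mono h.le)))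
      fun hle ↦ h.not_ge (hψ.le_of_map_symbolIdeal_le hd hn hφ h.le hle)
  have : WellFoundedLT (Ideal L) := ‹IsArtinianRing L›
  exact hmono.wellFoundedLT

theorem hasArtinianLeftQuot_of_oreLocModel (hd : IsLeftDenominatorSet (gradedRegSet d))
    (m : OreLocModel (gradedRegSet d)) [IsArtinianRing m.L]
    (hn : IsNilpotentIdeal (primeRadical R)) (hC : ∀ c : R, RegModN c → IsRegElem c) :
    HasArtinianLeftQuot R := by
  obtain ⟨q⟩ := (isLeftDenominatorSet_regModN hd hn hC).nonempty_oreLocModel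
  have hArt := isArtinianRing_of_isOreLoc_gradedRegSet hd hn m.isOreLoc q.isOreLoc
  have hinj : Injective q.ψ := (injective_iff_map_eq_zero _).2 fun a ha ↦
    let ⟨s, hs, hsa⟩ := (q.ker a).1 ha
    (hC s hs).1 a hsa
  exact ⟨⟨q.L, q.ψ, isLeftQuotRing_of_isArtinianRing hinj fun l ↦
    let ⟨s, a, hs, hsa⟩ := q.denom l
    ⟨s, a, q.isUnit s hs, hsa⟩⟩, hArt⟩

end ArtinianCriterion

section FactorRing

open Polynomial

theorem FactorModel.exists_injective_lift {A : Type u} {L : Type*} [Ring A] [Ring L] {T : Set A}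
    (f : FactorModel T) {ψ : A →+* L} (hψ : ∀ a, ψ a = 0 ↔ a ∈ T) :
    ∃ χ : f.H →+* L, Injective χ ∧ ∀ a, χ (f.ρ a) = ψ a := by
  have hχ : ∀ a, f.ρ.liftOfSurjective f.surj
      ⟨ψ, fun a ha ↦ (hψ a).2 ((f.ker a).1 ha)⟩ (f.ρ a) = ψ a :=
    fun a ↦ RingHom.liftOfRightInverse_comp_apply _ _ _ _ a
  refine ⟨_, (injective_iff_map_eq_zero _).2 (f.surj.forall.2 fun a ha ↦ ?_), hχ⟩
  rwa [hχ, hψ, ← f.ker] at ha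

variable {R : Type u} [Ring R] {d : GradedModel R}

theorem FactorModel.exists_isLeftQuotRing (f : FactorModel (gradedTorsionSet d))
    (m : OreLocModel (gradedRegSet d)) [IsArtinianRing m.L] :
    ∃ χ : f.H →+* m.L, IsLeftQuotRing χ := by
  obtain ⟨χ, hinj, hχ⟩ := f.exists_injective_lift m.ker
  refine ⟨χ, isLeftQuotRing_of_isArtinianRing hinj fun l ↦ ?_⟩
  obtain ⟨s, a, hs, hsa⟩ := m.denom l
  exact ⟨f.ρ s, f.ρ a, by rw [hχ]; exact m.isUnit s hs, by rw [hχ, hχ, hsa]⟩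

theorem nonempty_factorModel (m : OreLocModel (gradedRegSet d)) :
    Nonempty (FactorModel (gradedTorsionSet d)) :=
  ⟨⟨m.ψ.range, m.ψ.rangeRestrict, m.ψ.rangeRestrict_surjective, fun a ↦
    Subtype.ext_iff.trans (m.ker a)⟩⟩

theorem reesRing.ker_constCoeff_le_primeRadical (hn : IsNilpotentIdeal (primeRadical R)) :
    RingHom.ker (constCoeff (primeRadical R)) ≤ primeRadical (reesRing (primeRadical R)) :=
  ker_constCoeff_le.trans (isNilpotentIdeal_constIdeal hn).le_primeRadical

theorem reesRing.comap_constCoeff_primeRadical (hn : IsNilpotentIdeal (primeRadical R)) :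
    (primeRadical R).comap (constCoeff (primeRadical R)) =
      primeRadical (reesRing (primeRadical R)) :=
  comap_primeRadical_of_surjective constCoeff_surjective (ker_constCoeff_le_primeRadical hn)

namespace FactorModel

variable (f : FactorModel (gradedTorsionSet d))

theorem comp_ofRees_surjective : Surjective (f.ρ.comp d.ofRees) :=
  f.surj.comp d.ofRees_surjective

theorem ker_comp_ofRees_le (hn : IsNilpotentIdeal (primeRadical R)) :
    RingHom.ker (f.ρ.comp d.ofRees) ≤ primeRadical (reesRing (primeRadical R)) := by
  rw [← reesRing.comap_constCoeff_primeRadical hn]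
  intro p hp
  obtain ⟨_, ⟨c, hc, rfl⟩, hcp⟩ := (f.ker (d.ofRees p)).1 hp
  rw [← d.ofRees_C, ← map_mul, d.ofRees_eq_zero_iff] at hcp
  exact hc.1 _ (by simpa [Submodule.pow_one] using hcp 0)

theorem map_ofRees_mem_primeRadical_iff (hn : IsNilpotentIdeal (primeRadical R))
    {p : reesRing (primeRadical R)} :
    f.ρ (d.ofRees p) ∈ primeRadical f.H ↔ (p : R[X]).coeff 0 ∈ primeRadical R := by
  rw [← RingHom.comp_apply, ← Ideal.mem_comap, ← reesRing.constCoeff_apply, ← Ideal.mem_comap,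
    comap_primeRadical_of_surjective f.comp_ofRees_surjective (f.ker_comp_ofRees_le hn),
    reesRing.comap_constCoeff_primeRadical hn]

theorem regModN_map_ofRees_iff (hn : IsNilpotentIdeal (primeRadical R))
    {p : reesRing (primeRadical R)} :
    RegModN (f.ρ (d.ofRees p)) ↔ RegModN ((p : R[X]).coeff 0) := by
  rw [← RingHom.comp_apply, ← reesRing.constCoeff_apply,
    regModN_map_iff_of_surjective f.comp_ofRees_surjective (f.ker_comp_ofRees_le hn),
    regModN_map_iff_of_surjective reesRing.constCoeff_surjective
      (reesRing.ker_constCoeff_le_primeRadical hn)]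

end FactorModel

theorem OreLocModel.isUnit_of_isRegElem_factor (m : OreLocModel (gradedRegSet d))
    (f : FactorModel (gradedTorsionSet d)) (hn : IsNilpotentIdeal (primeRadical R)) {Q : Type*}
    [Ring Q] [IsArtinianRing Q] {φ : f.H →+* Q} (hφ : IsLeftQuotRing φ) {ι : m.L →+* Q}
    (hι : Injective ι) (h : ∀ g, ι (m.ψ g) = φ (f.ρ g)) {g : d.G} (hg : IsRegElem (f.ρ g)) :
    IsUnit (m.ψ g) := by
  obtain ⟨p, rfl⟩ := d.ofRees_surjective g
  have hp : RegModN ((p : R[X]).coeff 0) := (f.regModN_map_ofRees_iff hn).1 (hφ.regModN_iff.2 hg)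
  have hrem : ι (m.ψ (d.ofRees (p - reesRing.C _ ((p : R[X]).coeff 0)))) ∈ primeRadical Q := by
    rw [h, ← Ideal.mem_comap, hφ.comap_primeRadical, f.map_ofRees_mem_primeRadical_iff hn]
    simp
  have hunit := isUnit_add_of_map_mem_primeRadical hι (m.isUnit _ ⟨_, hp, rfl⟩) hrem
  rwa [← d.ofRees_C, ← map_add, ← map_add, add_sub_cancel] at hunit

theorem isArtinianRing_of_factorModel (hd : IsLeftDenominatorSet (gradedRegSet d))
    (m : OreLocModel (gradedRegSet d)) (f : FactorModel (gradedTorsionSet d))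
    (hn : IsNilpotentIdeal (primeRadical R)) {Q : Type*} [Ring Q] [IsArtinianRing Q]
    {φ : f.H →+* Q} (hφ : IsLeftQuotRing φ) : IsArtinianRing m.L := by
  obtain ⟨χ, hχinj, hχ⟩ := f.exists_injective_lift m.ker
  obtain ⟨ι, hι⟩ := m.isOreLoc.exists_lift hd (χ := φ.comp f.ρ) fun s hs ↦
    hφ.isUnit _ (isRegElem_of_isUnit_map hχinj (by rw [hχ]; exact m.isUnit s hs))
  simp only [RingHom.comp_apply] at hι
  have hinj : Injective ι := m.isOreLoc.injective_of_comp fun a ha ↦ by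
    rw [hι, map_eq_zero_iff φ hφ.inj] at ha
    rw [← hχ, ha, map_zero]
  have hsurj : Surjective ι := fun q ↦ by
    obtain ⟨c, b, hc, hcb⟩ := hφ.denom q
    obtain ⟨g, rfl⟩ := f.surj c
    obtain ⟨b, rfl⟩ := f.surj b
    obtain ⟨v, hv⟩ := m.isUnit_of_isRegElem_factor f hn hφ hinj hι hc
    refine ⟨↑v⁻¹ * m.ψ b, (hφ.isUnit _ hc).mul_right_injective ?_⟩
    calc φ (f.ρ g) * ι (↑v⁻¹ * m.ψ b) = ι (v * (↑v⁻¹ * m.ψ b)) := by rw [← hι, ← map_mul, hv]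
      _ = φ (f.ρ g) * q := by rw [Units.mul_inv_cancel_left, hι, hcb]
  exact (RingEquiv.ofBijective ι ⟨hinj, hsurj⟩).symm.surjective.isArtinianRing

end FactorRing

/-- **Theorem (`3Sep12`).** Let `R` be a ring, `n` its prime radical and `gr R` the
associated graded ring with respect to the `n`-adic filtration (a model `d`).  TFAE:
(1) `R` has a left Artinian left quotient ring `Q`;
(2) `C̄` is a left denominator set in `gr R`, `C̄⁻¹ gr R` is a left Artinian ring, `n` is a
nilpotent ideal, and `C' ⊆ C`;
(3) `C̄` is a left denominator set in `gr R`, the left quotient ring `Q(gr R/τ)` of `gr R/τ`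
is a left Artinian ring, `n` is a nilpotent ideal, and `C' ⊆ C`.
Moreover, if these conditions hold then `gr Q ≅ Q(gr R/τ) ≅ C̄⁻¹ gr R`, where `gr Q` is the
associated graded ring of `Q` with respect to its prime radical filtration. -/
theorem left_artinian_left_quotient_ring_criterion_associated_graded
    {R : Type u} [Ring R] (d : GradedModel R) :
    (HasArtinianLeftQuot R ↔
      (IsLeftDenominatorSet (gradedRegSet d) ∧
        (∃ m : OreLocModel (gradedRegSet d), IsArtinianRing m.L) ∧
        IsNilpotentIdeal (primeRadical R) ∧
        (∀ c : R, RegModN c → IsRegElem c))) ∧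
    (HasArtinianLeftQuot R ↔
      (IsLeftDenominatorSet (gradedRegSet d) ∧
        (∃ f : FactorModel (gradedTorsionSet d), HasArtinianLeftQuot f.H) ∧
        IsNilpotentIdeal (primeRadical R) ∧
        (∀ c : R, RegModN c → IsRegElem c))) ∧
    (HasArtinianLeftQuot R →
      ∀ e : LeftQuotData R, IsArtinianRing e.Q →
        ∀ (dQ : GradedModel e.Q) (m : OreLocModel (gradedRegSet d)),
          Nonempty (dQ.G ≃+* m.L) ∧
          ∀ (f : FactorModel (gradedTorsionSet d)) (h : LeftQuotData f.H),
            Nonempty (h.Q ≃+* m.L)) := by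
  have one_two : HasArtinianLeftQuot R → IsLeftDenominatorSet (gradedRegSet d) ∧
      (∃ m : OreLocModel (gradedRegSet d), IsArtinianRing m.L) ∧
      IsNilpotentIdeal (primeRadical R) ∧ ∀ c : R, RegModN c → IsRegElem c := fun ⟨e, _⟩ ↦
    ⟨e.quot.isLeftDenominatorSet_gradedRegSet d, e.quot.exists_oreLocModel_isArtinianRing d,
      e.quot.isNilpotentIdeal_primeRadical, fun _ ↦ e.quot.regModN_iff.1⟩
  refine ⟨⟨one_two, ?_⟩, ⟨fun h ↦ ?_, ?_⟩, fun _ e _ dQ m ↦ ?_⟩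
  · rintro ⟨hd, ⟨m, _⟩, hn, hC⟩
    exact hasArtinianLeftQuot_of_oreLocModel hd m hn hC
  · obtain ⟨hd, ⟨m, hm⟩, hn, hC⟩ := one_two h
    obtain ⟨f⟩ := nonempty_factorModel m
    obtain ⟨χ, hχ⟩ := f.exists_isLeftQuotRing m
    exact ⟨hd, ⟨f, ⟨m.L, χ, hχ⟩, hm⟩, hn, hC⟩
  · rintro ⟨hd, ⟨f, q, _⟩, hn, hC⟩
    obtain ⟨m⟩ := hd.nonempty_oreLocModel
    have := isArtinianRing_of_factorModel hd m f hn q.quot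
    exact hasArtinianLeftQuot_of_oreLocModel hd m hn hC
  · have hd := e.quot.isLeftDenominatorSet_gradedRegSet d
    obtain ⟨ε⟩ := (e.quot.isOreLoc_gradedMap d dQ).nonempty_ringEquiv hd m.isOreLoc
    have := dQ.isArtinianRing
    have : IsArtinianRing m.L := ε.surjective.isArtinianRing
    refine ⟨⟨ε⟩, fun f q ↦ ?_⟩
    obtain ⟨χ, hχ⟩ := f.exists_isLeftQuotRing m
    exact q.quot.nonempty_ringEquiv hχ
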